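/- Let ψ₁,…,ψ_M : ℝ → ℝ be continuous and linearly independent on [0,2π], let h₀ > 0, and let W_e, W_u, W_{Δu} : ℝ → ℝ be continuous nonnegative weight functions such that either W_e(α) > 0 for all α ∈ [0,2π] or W_u(α) > 0 for all α ∈ [0,2π]. Define M_ψ = G(h₀²W_e + W_u + W_{Δu}), Q_ψ = M_ψ⁻¹ G(h₀²W_e + W_{Δu}), L_ψ = M_ψ⁻¹ G(h₀ W_e), fix c ∈ ℝ^M, and consider the ILC parameter iteration θ_{j+1} = Q_ψ θ_j + L_ψ (c − h₀ θ_j). Then there exists a unique fixed point θ* ∈ ℝ^M satisfying θ* = Q_ψ θ* + L_ψ (c − h₀ θ*), and for every initial parameter vector θ₀ ∈ ℝ^M the sequence (θ_j) converges to θ*. -/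

import Mathlib

open Matrix Finset Filter intervalIntegral

/-- The weighted Gram matrix of the basis functions `ψ` with weight `w`:
`(gram M ψ w) k l = ∫₀^{2π} w(α) ψ_k(α) ψ_l(α) dα`. -/
noncomputable def gram (M : ℕ) (ψ : Fin M → ℝ → ℝ) (w : ℝ → ℝ) :
    Matrix (Fin M) (Fin M) ℝ :=
  Matrix.of fun k l => ∫ α in (0:ℝ)..(2 * Real.pi), w α * ψ k α * ψ l α

lemma gram_dot (M : ℕ) (ψ : Fin M → ℝ → ℝ) (hcont : ∀ k, Continuous (ψ k))
    (w : ℝ → ℝ) (hw : Continuous w) (x y : Fin M → ℝ) :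
    x ⬝ᵥ (gram M ψ w *ᵥ y) =
      ∫ α in (0:ℝ)..(2 * Real.pi), w α * (∑ k, x k * ψ k α) * (∑ k, y k * ψ k α) := by
  have h1 : ∀ α, w α * (∑ k, x k * ψ k α) * (∑ k, y k * ψ k α)
      = ∑ k, ∑ l, x k * ((w α * ψ k α * ψ l α) * y l) := by
    intro α
    rw [mul_assoc, Finset.sum_mul_sum, Finset.mul_sum]
    simp_rw [Finset.mul_sum]
    refine Finset.sum_congr rfl fun k _ => Finset.sum_congr rfl fun l _ => ?_
    ring
  simp_rw [h1]
  rw [intervalIntegral.integral_finsetSum]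
  · simp only [dotProduct, mulVec, _root_.gram, Matrix.of_apply]
    refine Finset.sum_congr rfl fun k _ => ?_
    rw [intervalIntegral.integral_finsetSum]
    · rw [Finset.mul_sum]
      refine Finset.sum_congr rfl fun l _ => ?_
      rw [intervalIntegral.integral_const_mul, intervalIntegral.integral_mul_const]
    · intro l _
      exact Continuous.intervalIntegrable (by fun_prop) _ _
  · intro k _
    exact Continuous.intervalIntegrable (by fun_prop) _ _

lemma gram_add (M : ℕ) (ψ : Fin M → ℝ → ℝ) (hcont : ∀ k, Continuous (ψ k))
    (w v : ℝ → ℝ) (hw : Continuous w) (hv : Continuous v) :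
    gram M ψ (fun α => w α + v α) = gram M ψ w + gram M ψ v := by
  ext k l
  simp only [_root_.gram, Matrix.of_apply, Matrix.add_apply]
  rw [← intervalIntegral.integral_add]
  · congr 1; ext α; ring
  · exact Continuous.intervalIntegrable (by fun_prop) _ _
  · exact Continuous.intervalIntegrable (by fun_prop) _ _

lemma gram_smul (M : ℕ) (ψ : Fin M → ℝ → ℝ) (w : ℝ → ℝ) (a : ℝ) :
    gram M ψ (fun α => a * w α) = a • gram M ψ w := by
  ext k l
  simp only [_root_.gram, Matrix.of_apply, Matrix.smul_apply, smul_eq_mul]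
  rw [← intervalIntegral.integral_const_mul]
  congr 1; ext α; ring

lemma gram_symm (M : ℕ) (ψ : Fin M → ℝ → ℝ) (w : ℝ → ℝ) :
    (gram M ψ w)ᵀ = gram M ψ w := by
  ext k l
  simp only [_root_.gram, Matrix.of_apply, Matrix.transpose_apply]
  congr 1; ext α; ring

lemma gram_nonneg (M : ℕ) (ψ : Fin M → ℝ → ℝ) (hcont : ∀ k, Continuous (ψ k))
    (w : ℝ → ℝ) (hw : Continuous w) (h0 : ∀ α, 0 ≤ w α) (x : Fin M → ℝ) :
    0 ≤ x ⬝ᵥ (gram M ψ w *ᵥ x) := by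
  rw [gram_dot M ψ hcont w hw]
  apply intervalIntegral.integral_nonneg (by positivity)
  intro α _
  rw [mul_assoc]
  exact mul_nonneg (h0 α) (mul_self_nonneg _)

lemma gram_pos (M : ℕ) (ψ : Fin M → ℝ → ℝ) (hcont : ∀ k, Continuous (ψ k))
    (hli : ∀ x : Fin M → ℝ,
      (∀ α ∈ Set.Icc (0:ℝ) (2 * Real.pi), ∑ k, x k * ψ k α = 0) → x = 0)
    (w : ℝ → ℝ) (hw : Continuous w) (h0 : ∀ α ∈ Set.Icc (0:ℝ) (2 * Real.pi), 0 < w α)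
    (x : Fin M → ℝ) (hx : x ≠ 0) :
    0 < x ⬝ᵥ (gram M ψ w *ᵥ x) := by
  rw [gram_dot M ψ hcont w hw]
  have : ∃ α ∈ Set.Icc (0:ℝ) (2 * Real.pi), ∑ k, x k * ψ k α ≠ 0 := by
    by_contra hcon
    push Not at hcon
    exact hx (hli x hcon)
  obtain ⟨a, ha, hne⟩ := this
  apply intervalIntegral.integral_pos (by positivity)
  · exact Continuous.continuousOn (by fun_prop)
  · intro α hα
    rw [mul_assoc]
    exact mul_nonneg (h0 α (Set.Ioc_subset_Icc_self hα)).le (mul_self_nonneg _)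
  · refine ⟨a, ha, ?_⟩
    rw [mul_assoc]
    exact mul_pos (h0 a ha) (mul_self_pos.mpr hne)

lemma isUnit_det_of_pos {M : ℕ} (A : Matrix (Fin M) (Fin M) ℝ)
    (hA : ∀ x : Fin M → ℝ, x ≠ 0 → 0 < x ⬝ᵥ (A *ᵥ x)) : IsUnit A.det := by
  rw [isUnit_iff_ne_zero]
  intro h
  obtain ⟨v, hv, h2⟩ := Matrix.exists_mulVec_eq_zero_iff.mpr h
  have := hA v hv
  rw [h2] at this
  simp at this

lemma dot_symm {M : ℕ} (A : Matrix (Fin M) (Fin M) ℝ) (hA : Aᵀ = A) (x y : Fin M → ℝ) :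
    x ⬝ᵥ (A *ᵥ y) = y ⬝ᵥ (A *ᵥ x) := by
  rw [Matrix.dotProduct_mulVec, ← Matrix.mulVec_transpose, hA, dotProduct_comm]

/-- Error recursion `(A + B) e_{j+1} = B e_j` converges to zero. -/
lemma err_tendsto {M : ℕ} (A B : Matrix (Fin M) (Fin M) ℝ) (hAs : Aᵀ = A) (hBs : Bᵀ = B)
    (hA : ∀ x : Fin M → ℝ, x ≠ 0 → 0 < x ⬝ᵥ (A *ᵥ x))
    (hB : ∀ x : Fin M → ℝ, 0 ≤ x ⬝ᵥ (B *ᵥ x))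
    (e : ℕ → Fin M → ℝ) (he : ∀ j, (A + B) *ᵥ e (j + 1) = B *ᵥ e j) :
    Tendsto e atTop (nhds 0) := by
  have hA0 : ∀ x : Fin M → ℝ, 0 ≤ x ⬝ᵥ (A *ᵥ x) := by
    intro x
    by_cases hx : x = 0
    · simp [hx]
    · exact (hA x hx).le
  have hstep : ∀ j, e (j+1) ⬝ᵥ (B *ᵥ e (j+1)) + 2 * (e (j+1) ⬝ᵥ (A *ᵥ e (j+1)))
      ≤ e j ⬝ᵥ (B *ᵥ e j) := by
    intro j
    have h1 := congrArg (fun v => e (j+1) ⬝ᵥ v) (he j)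
    simp only [Matrix.add_mulVec, dotProduct_add] at h1
    have h2 := hB (e (j+1) - e j)
    simp only [Matrix.mulVec_sub, dotProduct_sub, sub_dotProduct] at h2
    have h3 := dot_symm B hBs (e j) (e (j+1))
    linarith
  have hsum : ∀ n, ∑ j ∈ Finset.range n, e (j+1) ⬝ᵥ (A *ᵥ e (j+1))
      ≤ e 0 ⬝ᵥ (B *ᵥ e 0) - e n ⬝ᵥ (B *ᵥ e n) := by
    intro n
    induction n with
    | zero => simp
    | succ n ih =>
      rw [Finset.sum_range_succ]
      have := hstep n
      have := hA0 (e (n+1))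
      linarith
  have hS : Summable (fun j => e (j+1) ⬝ᵥ (A *ᵥ e (j+1))) :=
    summable_of_sum_range_le (c := e 0 ⬝ᵥ (B *ᵥ e 0)) (fun j => hA0 _)
      (fun n => by have := hsum n; have := hB (e n); linarith)
  have hT := hS.tendsto_atTop_zero
  have hT' : Tendsto (fun j => e j ⬝ᵥ (A *ᵥ e j)) atTop (nhds 0) :=
    (tendsto_add_atTop_iff_nat 1).mp hT
  have hu := isUnit_det_of_pos A hA
  rw [tendsto_pi_nhds]
  intro i
  set d : Fin M → ℝ := A⁻¹ *ᵥ Pi.single i 1 with hd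
  have hAd : A *ᵥ d = Pi.single i 1 := by
    rw [hd, Matrix.mulVec_mulVec, Matrix.mul_nonsing_inv A hu, Matrix.one_mulVec]
  have hbound : ∀ j, (e j i) ^ 2 ≤ (d ⬝ᵥ (A *ᵥ d)) * (e j ⬝ᵥ (A *ᵥ e j)) := by
    intro j
    have hei : e j ⬝ᵥ (A *ᵥ d) = e j i := by rw [hAd]; simp
    have hei' : d ⬝ᵥ (A *ᵥ e j) = e j i := by rw [dot_symm A hAs, hei]
    have hq : ∀ t : ℝ, 0 ≤ (d ⬝ᵥ (A *ᵥ d)) * (t * t) + (2 * e j i) * t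
        + e j ⬝ᵥ (A *ᵥ e j) := by
      intro t
      have h := hA0 (e j + t • d)
      simp only [Matrix.mulVec_add, Matrix.mulVec_smul, dotProduct_add, add_dotProduct,
        smul_dotProduct, dotProduct_smul, smul_eq_mul, hei, hei'] at h
      linarith
    have := discrim_le_zero hq
    unfold discrim at this
    linarith
  have hsq : Tendsto (fun j => (e j i) ^ 2) atTop (nhds 0) := by
    refine squeeze_zero (fun j => sq_nonneg _) hbound ?_
    simpa using hT'.const_mul (d ⬝ᵥ (A *ᵥ d))
  have habs := (Real.continuous_sqrt.tendsto 0).comp hsq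
  simp only [Function.comp_def, Real.sqrt_sq_eq_abs, Real.sqrt_zero] at habs
  exact (tendsto_zero_iff_abs_tendsto_zero _).mpr habs

lemma abstract_conv {M : ℕ} (A B C : Matrix (Fin M) (Fin M) ℝ) (h : ℝ)
    (hAs : Aᵀ = A) (hBs : Bᵀ = B)
    (hA : ∀ x : Fin M → ℝ, x ≠ 0 → 0 < x ⬝ᵥ (A *ᵥ x))
    (hB : ∀ x : Fin M → ℝ, 0 ≤ x ⬝ᵥ (B *ᵥ x)) (c : Fin M → ℝ) :
    ∃ θstar : Fin M → ℝ,
      (θstar = ((A + B)⁻¹ * (h • C + B)) *ᵥ θstar + ((A + B)⁻¹ * C) *ᵥ (c - h • θstar)) ∧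
      (∀ θ' : Fin M → ℝ,
        θ' = ((A + B)⁻¹ * (h • C + B)) *ᵥ θ' + ((A + B)⁻¹ * C) *ᵥ (c - h • θ') → θ' = θstar) ∧
      (∀ θ : ℕ → Fin M → ℝ,
        (∀ j, θ (j + 1) =
          ((A + B)⁻¹ * (h • C + B)) *ᵥ θ j + ((A + B)⁻¹ * C) *ᵥ (c - h • θ j)) →
        Tendsto θ atTop (nhds θstar)) := by
  have huA := isUnit_det_of_pos A hA
  have huN : IsUnit (A + B).det := isUnit_det_of_pos (A + B) (by
    intro x hx
    rw [Matrix.add_mulVec, dotProduct_add]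
    have := hA x hx
    have := hB x
    linarith)
  have key : ∀ x y : Fin M → ℝ,
      x = ((A + B)⁻¹ * (h • C + B)) *ᵥ y + ((A + B)⁻¹ * C) *ᵥ (c - h • y) ↔
      (A + B) *ᵥ x = B *ᵥ y + C *ᵥ c := by
    intro x y
    have e1 : ((A + B)⁻¹ * (h • C + B)) *ᵥ y + ((A + B)⁻¹ * C) *ᵥ (c - h • y)
        = (A + B)⁻¹ *ᵥ (B *ᵥ y + C *ᵥ c) := by
      rw [← Matrix.mulVec_mulVec, ← Matrix.mulVec_mulVec, ← Matrix.mulVec_add]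
      congr 1
      rw [Matrix.add_mulVec, Matrix.mulVec_sub, Matrix.mulVec_smul, Matrix.smul_mulVec]
      abel
    rw [e1]
    constructor
    · intro hx
      rw [hx, Matrix.mulVec_mulVec, Matrix.mul_nonsing_inv _ huN, Matrix.one_mulVec]
    · intro hx
      rw [← hx, Matrix.mulVec_mulVec, Matrix.nonsing_inv_mul _ huN, Matrix.one_mulVec]
  simp only [key]
  have hstar : A *ᵥ (A⁻¹ *ᵥ (C *ᵥ c)) = C *ᵥ c := by
    rw [Matrix.mulVec_mulVec, Matrix.mul_nonsing_inv _ huA, Matrix.one_mulVec]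
  refine ⟨A⁻¹ *ᵥ (C *ᵥ c), ?_, ?_, ?_⟩
  · rw [Matrix.add_mulVec, hstar, add_comm]
  · intro x hx
    rw [Matrix.add_mulVec, add_comm] at hx
    rw [← add_left_cancel hx, Matrix.mulVec_mulVec, Matrix.nonsing_inv_mul _ huA,
      Matrix.one_mulVec]
  · intro θ hθ
    have := err_tendsto A B hAs hBs hA hB (fun j => θ j - A⁻¹ *ᵥ (C *ᵥ c)) (by
      intro j
      rw [Matrix.mulVec_sub, hθ j, Matrix.add_mulVec, hstar, Matrix.mulVec_sub]
      abel)
    exact tendsto_sub_nhds_zero_iff.mp this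

/-- **Convergence part of Theorem 3 of the paper.** The ILC parameter iteration
`θ_{j+1} = Q_ψ θ_j + L_ψ (c - h₀ θ_j)` has a unique fixed point `θ*`, and for
every initial parameter vector the sequence of iterates converges to `θ*`. -/
theorem ilc_convergence (M : ℕ) (ψ : Fin M → ℝ → ℝ)
    (hcont : ∀ k, Continuous (ψ k))
    (hli : ∀ x : Fin M → ℝ,
      (∀ α ∈ Set.Icc (0:ℝ) (2 * Real.pi), ∑ k, x k * ψ k α = 0) → x = 0)
    (h₀ : ℝ) (hh₀ : 0 < h₀)
    (We Wu WΔu : ℝ → ℝ)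
    (hWec : Continuous We) (hWuc : Continuous Wu) (hWΔc : Continuous WΔu)
    (hWe : ∀ α, 0 ≤ We α) (hWu : ∀ α, 0 ≤ Wu α) (hWΔ : ∀ α, 0 ≤ WΔu α)
    (hpos : (∀ α ∈ Set.Icc (0:ℝ) (2 * Real.pi), 0 < We α) ∨
            (∀ α ∈ Set.Icc (0:ℝ) (2 * Real.pi), 0 < Wu α))
    (c : Fin M → ℝ) :
    let Mψ := gram M ψ (fun α => h₀ ^ 2 * We α + Wu α + WΔu α)
    let Qψ := Mψ⁻¹ * gram M ψ (fun α => h₀ ^ 2 * We α + WΔu α)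
    let Lψ := Mψ⁻¹ * gram M ψ (fun α => h₀ * We α)
    ∃ θstar : Fin M → ℝ,
      (θstar = Qψ *ᵥ θstar + Lψ *ᵥ (c - h₀ • θstar)) ∧
      (∀ θ' : Fin M → ℝ, θ' = Qψ *ᵥ θ' + Lψ *ᵥ (c - h₀ • θ') → θ' = θstar) ∧
      (∀ θ : ℕ → Fin M → ℝ,
        (∀ j, θ (j + 1) = Qψ *ᵥ θ j + Lψ *ᵥ (c - h₀ • θ j)) →
        Tendsto θ atTop (nhds θstar)) := by
  have hw : ∀ α ∈ Set.Icc (0:ℝ) (2 * Real.pi), 0 < h₀ ^ 2 * We α + Wu α := by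
    intro α hα
    have h2 : 0 < h₀ ^ 2 := by positivity
    rcases hpos with h | h
    · exact add_pos_of_pos_of_nonneg (mul_pos h2 (h α hα)) (hWu α)
    · exact add_pos_of_nonneg_of_pos (mul_nonneg h2.le (hWe α)) (h α hα)
  have hc1 : Continuous (fun α => h₀ ^ 2 * We α + Wu α) := by fun_prop
  have e1 := gram_add M ψ hcont (fun α => h₀ ^ 2 * We α + Wu α) WΔu hc1 hWΔc
  have e2 := gram_add M ψ hcont (fun α => h₀ ^ 2 * We α) WΔu (by fun_prop) hWΔc
  have e3 : gram M ψ (fun α => h₀ ^ 2 * We α) = h₀ • gram M ψ (fun α => h₀ * We α) := by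
    rw [gram_smul, gram_smul, smul_smul, sq]
  rw [e3] at e2
  intro Mψ Qψ Lψ
  simp only [Qψ, Lψ, Mψ]
  rw [e1, e2]
  exact abstract_conv _ _ _ h₀ (gram_symm _ _ _) (gram_symm _ _ _)
    (gram_pos M ψ hcont hli _ hc1 hw) (gram_nonneg M ψ hcont _ hWΔc hWΔ) c
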